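/- arXiv:1401.6976 — 2 statements merged into one kernel-verified Lean document; each statement's English description precedes it below -/
import Mathlib

section
/- There exists c₀ ∈ (0, c_crit) such that for every c with c₀ < c < c_crit, there is no twice-differentiable function f : ℝ → ℝ satisfying Jang's equation on L_c at every u ∈ ℝ. (Equivalently: on the Cauchy slices L_c sufficiently close to the Schwarzschild singularity, every radial solution of Jang's equation blows up.) -/
/-- The function `φ(r) = e^{r/(2m)-1}(r - 2m)` defining the Kruskal radius implicitly. -/
noncomputable def phi (m r : ℝ) : ℝ := Real.exp (r / (2*m) - 1) * (r - 2*m)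

/-- The derivative `φ_r(r) = (r/(2m)) e^{r/(2m)-1}`. -/
noncomputable def phiR (m r : ℝ) : ℝ := (r / (2*m)) * Real.exp (r / (2*m) - 1)

/-- The critical parameter `c_crit = √(8m/e)`. -/
noncomputable def cCrit (m : ℝ) : ℝ := Real.sqrt (8*m / Real.exp 1)

/-- The right-hand side of Jang's equation on the slice `L_c`:
`f''(u) = jangRHS m c u r (f'(u))` where `r = r(u)` solves `φ(r) = u(u+c)`. -/
noncomputable def jangRHS (m c u r p : ℝ) : ℝ :=
  c * Real.sqrt (2*m / phiR m r + p^2/4) *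
      ((1 / phiR m r) * (1/(2*m) - 3/r) - p^2/(2*m*r))
    - ((2*u + c)/(4*m*r)) * p^3
    - ((2*u + c)/(2 * phiR m r)) * (1/(2*m) + 5/r) * p

/-- The right-hand side `F_c(s,h)` of the transformed Jang equation,
with `r = r_c(s)` solving `φ(r) = (c²/4)(s²-1)`. -/
noncomputable def Fc (m c s r h : ℝ) : ℝ :=
  (c^2/2) * Real.sqrt (2*m*(1 - h^2) / phiR m r + h^2/4) *
      (((1 - h^2) / phiR m r) * (1/(2*m) - 3/r) - h^2/(2*m*r))
    - (c^2*s/(8*m*r)) * h^3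
    - (c^2*s/(4 * phiR m r)) * (1/(2*m) + 5/r) * (h*(1 - h^2))

/-- On `[0, 1]`, the normalized radius function `1 + eˣ(x - 1)` is at least `x² / 4`. -/
lemma sq_div_four_le_one_add_exp_mul {x : ℝ} (hx0 : 0 ≤ x) (hx1 : x ≤ 1) :
    x ^ 2 / 4 ≤ 1 + Real.exp x * (x - 1) := by
  have h1 : 1 - x / 2 ≤ Real.exp (-(x / 2)) := by
    have := Real.add_one_le_exp (-(x / 2))
    linarith
  have h2 : Real.exp x * Real.exp (-(x / 2)) ^ 2 = 1 := by
    rw [pow_two, ← Real.exp_add, ← Real.exp_add, Real.exp_eq_one_iff]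
    ring
  have h3 : (1 - x / 2) ^ 2 ≤ Real.exp (-(x / 2)) ^ 2 := pow_le_pow_left₀ (by linarith) h1 2
  have h4 : Real.exp x * (1 - x / 2) ^ 2 ≤ 1 := by
    exact (mul_le_mul_of_nonneg_left h3 (Real.exp_pos x).le).trans h2.le
  have h5 : 1 ≤ Real.exp x := Real.one_le_exp hx0
  nlinarith [mul_nonneg (sq_nonneg x) (sub_nonneg.2 h5)]

/-- The radius is at most `2mX` wherever `φ + 2m/e` is at most `mX²/(2e)`. -/
lemma radius_le_of_phi_le {m r X : ℝ} (hm : 0 < m) (hr : 0 < r) (hX0 : 0 ≤ X) (hX1 : X ≤ 1)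
    (h : phi m r + 2 * m / Real.exp 1 ≤ m * X ^ 2 / (2 * Real.exp 1)) :
    r ≤ 2 * m * X := by
  obtain ⟨x, rfl⟩ : ∃ x, r = 2 * m * x := ⟨r / (2 * m), by field_simp⟩
  have hx : 0 < x := by
    by_contra hx
    nlinarith
  have he : 0 < Real.exp 1 := Real.exp_pos 1
  have hphi : phi m (2 * m * x) + 2 * m / Real.exp 1
      = 2 * m / Real.exp 1 * (1 + Real.exp x * (x - 1)) := by
    rw [phi, mul_div_cancel_left₀ x (by positivity : 2 * m ≠ 0), Real.exp_sub]
    field_simp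
    ring
  have hle : 1 + Real.exp x * (x - 1) ≤ X ^ 2 / 4 := by
    rw [hphi] at h
    have : m * X ^ 2 / (2 * Real.exp 1) = 2 * m / Real.exp 1 * (X ^ 2 / 4) := by
      field_simp
      ring
    rw [this] at h
    exact le_of_mul_le_mul_left h (by positivity)
  have hxX : x ≤ X := by
    rcases le_total x 1 with hx1 | hx1
    · have := sq_div_four_le_one_add_exp_mul hx.le hx1
      exact (sq_le_sq₀ hx.le hX0).1 (by linarith)
    · nlinarith [mul_nonneg (Real.exp_pos x).le (sub_nonneg.2 hx1)]
  gcongr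

/-- Close to the singularity, the right-hand side of Jang's equation is bounded above by a
negative multiple of `1 + p²`. -/
lemma jangRHS_le {m c u x p : ℝ} (hm : 0 < m) (hc : 0 < c) (hx0 : 0 < x) (hx1 : x ≤ 1 / 2)
    (hxm : x ≤ 5 * m) (hv : |u + c / 2| ≤ c / 10) :
    jangRHS m c u (2 * m * x) p
      ≤ -(c * Real.sqrt (2 * m / x) / (8 * m ^ 2 * x)) * (1 + p ^ 2) := by
  obtain ⟨A, hA⟩ : ∃ A, A = 1 / phiR m (2 * m * x) := ⟨_, rfl⟩
  have hphiR : phiR m (2 * m * x) = x * Real.exp (x - 1) := by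
    rw [phiR, mul_div_cancel_left₀ x (by positivity : 2 * m ≠ 0)]
  have hAx : 1 / x ≤ A := by
    rw [hA, hphiR]
    apply one_div_le_one_div_of_le (by positivity)
    exact mul_le_of_le_one_right hx0.le (Real.exp_le_one_iff.2 (by linarith))
  have hA0 : 0 < A := lt_of_lt_of_le (by positivity) hAx
  obtain ⟨S, hS⟩ : ∃ S, S = Real.sqrt (2 * m * A + p ^ 2 / 4) := ⟨_, rfl⟩
  have hS1 : Real.sqrt (2 * m / x) ≤ S := by
    rw [hS]
    apply Real.sqrt_le_sqrt
    have : 2 * m / x ≤ 2 * m * A := by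
      rw [div_eq_mul_one_div]
      gcongr
    nlinarith [sq_nonneg p]
  have hS2 : |p| / 2 ≤ S := by
    rw [hS]
    apply Real.le_sqrt_of_sq_le
    rw [div_pow, sq_abs]
    nlinarith [mul_pos hm hA0]
  obtain ⟨v, hvdef⟩ : ∃ v, v = u + c / 2 := ⟨_, rfl⟩
  rw [← hvdef] at hv
  have hS0 : 0 ≤ S := (Real.sqrt_nonneg _).trans hS1
  have hvp : -(v * p) ≤ c * S / 5 := by
    calc -(v * p) ≤ |v * p| := neg_le_abs _
      _ = |v| * |p| := abs_mul v p
      _ ≤ c / 10 * (2 * S) := mul_le_mul hv (by linarith) (abs_nonneg _) (by positivity)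
      _ = c * S / 5 := by ring
  have hrhs : jangRHS m c u (2 * m * x) p
      = (1 / (4 * m ^ 2 * x)) * (c * S * (2 * m * A * (x - 3) - p ^ 2)
          - v * p * p ^ 2 - 2 * m * A * (x + 5) * (v * p)) := by
    have h1 : 2 * m / phiR m (2 * m * x) = 2 * m * A := by rw [hA]; ring
    have h2 : (2 * u + c) / (2 * phiR m (2 * m * x)) = v * A := by
      rw [hA, hvdef, hphiR]
      field_simp
    rw [jangRHS, h1, h2, ← hA, ← hS, show 2 * u + c = 2 * v by rw [hvdef]; ring]
    field_simp
    ring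
  have hmA : 1 ≤ 5 * m * A := by
    calc 1 = x * (1 / x) := by field_simp
      _ ≤ 5 * m * A := by gcongr
  have hcS : 0 ≤ c * S := by positivity
  have hbound : c * S * (2 * m * A * (x - 3) - p ^ 2)
        - v * p * p ^ 2 - 2 * m * A * (x + 5) * (v * p)
      ≤ -(c * Real.sqrt (2 * m / x) / 2) * (1 + p ^ 2) := by
    have h1 : -(v * p) * p ^ 2 ≤ c * S / 5 * p ^ 2 := by gcongr
    have h2 : 2 * m * A * (x + 5) * -(v * p) ≤ 2 * m * A * (x + 5) * (c * S / 5) := by gcongr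
    have h3 : c * Real.sqrt (2 * m / x) / 2 * (1 + p ^ 2) ≤ c * S / 2 * (1 + p ^ 2) := by gcongr
    have h4 : c * S * 1 ≤ c * S * (5 * m * A) := by gcongr
    have h5 : c * S * (m * A) * x ≤ c * S * (m * A) * (1 / 2) := by gcongr
    nlinarith [mul_nonneg hcS (sq_nonneg p), mul_nonneg hcS (mul_pos hm hA0).le]
  rw [hrhs]
  calc _ ≤ (1 / (4 * m ^ 2 * x)) * (-(c * Real.sqrt (2 * m / x) / 2) * (1 + p ^ 2)) := by gcongr
    _ = _ := by
      field_simp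
      ring

/-- A function satisfying `p' ≤ -L (1 + p²)` on `[a, b]` blows up if `(b - a) L ≥ π`. -/
lemma not_forall_deriv_le_neg_mul_one_add_sq {p p' : ℝ → ℝ} {a b L : ℝ} (hab : a < b)
    (hL : Real.pi ≤ (b - a) * L) (hp : ∀ u, HasDerivAt p (p' u) u) :
    ¬ ∀ u ∈ Set.Icc a b, p' u ≤ -L * (1 + p u ^ 2) := by
  intro h
  have hg : ∀ u, HasDerivAt (fun u => Real.arctan (p u)) (1 / (1 + p u ^ 2) * p' u) u :=
    fun u => (hp u).arctan
  obtain ⟨ξ, hξ, heq⟩ := exists_hasDerivAt_eq_slope _ _ hab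
    (fun u _ => (hg u).continuousAt.continuousWithinAt) (fun u _ => hg u)
  have h1 : 1 / (1 + p ξ ^ 2) * p' ξ ≤ -L := by
    rw [one_div_mul_eq_div, div_le_iff₀ (by positivity)]
    exact h ξ (Set.Ioo_subset_Icc_self hξ)
  rw [heq, div_le_iff₀ (by linarith)] at h1
  have h2 := Real.neg_pi_div_two_lt_arctan (p b)
  have h3 := Real.arctan_lt_pi_div_two (p a)
  linarith

/-- There exists `c₀ ∈ (0, c_crit)` such that for every `c` with
`c₀ < c < c_crit`, there is no twice-differentiable function `f : ℝ → ℝ` satisfying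
Jang's equation on `L_c` at every `u ∈ ℝ`. -/
theorem no_global_radial_solution (m : ℝ) (hm : 0 < m) :
    ∃ c₀ ∈ Set.Ioo 0 (cCrit m), ∀ c, c₀ < c → c < cCrit m →
      ¬ ∃ (f f' R : ℝ → ℝ),
          (∀ u, 0 < R u ∧ phi m (R u) = u * (u + c)) ∧
          (∀ u, HasDerivAt f (f' u) u) ∧
          (∀ u, HasDerivAt f' (jangRHS m c u (R u) (f' u)) u) := by
  have he : 0 < Real.exp 1 := Real.exp_pos 1
  obtain ⟨q, hq⟩ : ∃ q, q = Real.sqrt (m / Real.exp 1) := ⟨_, rfl⟩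
  have hq0 : 0 < q := hq ▸ Real.sqrt_pos.2 (by positivity)
  have hqsq : q ^ 2 = m / Real.exp 1 := hq ▸ Real.sq_sqrt (by positivity)
  obtain ⟨k, hk⟩ : ∃ k, k = Real.sqrt (2 * m) := ⟨_, rfl⟩
  have hk0 : 0 < k := hk ▸ Real.sqrt_pos.2 (by positivity)
  obtain ⟨T, hT5, hTm, hTπ⟩ : ∃ T : ℝ, 5 ≤ T ∧ 1 / (5 * m) ≤ T ∧
      Real.pi * (8 * m ^ 2) / (q ^ 2 * k) ≤ T :=
    ⟨max 5 (max (1 / (5 * m)) (Real.pi * (8 * m ^ 2) / (q ^ 2 * k))), by simp, by simp, by simp⟩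
  have hT0 : 0 < T := by linarith
  obtain ⟨X, hX⟩ : ∃ X, X = 1 / T ^ 2 := ⟨_, rfl⟩
  have hX0 : 0 < X := hX ▸ by positivity
  have hXT : X ≤ 1 / T := by
    rw [hX]
    exact one_div_le_one_div_of_le hT0 (by nlinarith)
  have hX5 : X ≤ 1 / 5 := hXT.trans (one_div_le_one_div_of_le (by norm_num) hT5)
  have hXm : X ≤ 5 * m := hXT.trans ((one_div_le (by positivity) hT0).1 hTm)
  have hcrit : cCrit m = Real.sqrt (q ^ 2 * 8) := by
    rw [cCrit, hqsq]
    ring_nf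
  have hX8 : 1 ≤ 8 - X ^ 2 := by nlinarith
  refine ⟨Real.sqrt (q ^ 2 * (8 - X ^ 2)), ⟨Real.sqrt_pos.2 (by positivity), ?_⟩, ?_⟩
  · rw [hcrit]
    apply Real.sqrt_lt_sqrt (by positivity)
    nlinarith [mul_pos (sq_pos_of_pos hq0) (sq_pos_of_pos hX0)]
  rintro c hc - ⟨f, p, R, hR, -, hp⟩
  have hc0 : 0 < c := (Real.sqrt_nonneg _).trans_lt hc
  have hcsq : q ^ 2 * (8 - X ^ 2) < c ^ 2 := (Real.sqrt_lt' hc0).1 hc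
  have hqc : q ≤ c := by
    apply (sq_le_sq₀ hq0.le hc0.le).1
    nlinarith [sq_pos_of_pos hq0]
  refine not_forall_deriv_le_neg_mul_one_add_sq (a := -c / 2 - q * X / 2)
    (b := -c / 2 + q * X / 2) (L := q * (k * T) / (8 * m ^ 2 * X)) (by nlinarith) ?_ hp ?_
  · rw [div_le_iff₀ (by positivity)] at hTπ
    have : (-c / 2 + q * X / 2 - (-c / 2 - q * X / 2)) * (q * (k * T) / (8 * m ^ 2 * X))
        = T * (q ^ 2 * k) / (8 * m ^ 2) := by
      field_simp
      ring
    rw [this, le_div_iff₀ (by positivity)]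
    exact hTπ
  · rintro u ⟨hu1, hu2⟩
    have hv : |u + c / 2| ≤ q * X / 2 := abs_le.2 ⟨by linarith, by linarith⟩
    have hvsq : (u + c / 2) ^ 2 ≤ (q * X / 2) ^ 2 := sq_le_sq.2 (hv.trans (le_abs_self _))
    obtain ⟨hr0, hr⟩ := hR u
    have hrX : R u ≤ 2 * m * X := by
      apply radius_le_of_phi_le hm hr0 hX0.le (by linarith)
      have h1 : m * X ^ 2 / (2 * Real.exp 1) = q ^ 2 * X ^ 2 / 2 := by rw [hqsq]; field_simp
      have h2 : 2 * m / Real.exp 1 = 2 * q ^ 2 := by rw [hqsq]; ring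
      rw [h1, h2, hr]
      nlinarith
    obtain ⟨x, hx⟩ : ∃ x, R u = 2 * m * x := ⟨R u / (2 * m), by field_simp⟩
    rw [hx] at hr0 hrX ⊢
    have hx0 : 0 < x := pos_of_mul_pos_right hr0 (by positivity)
    have hxX : x ≤ X := le_of_mul_le_mul_left hrX (by positivity)
    have hsqrt : k * T ≤ Real.sqrt (2 * m / x) := by
      apply Real.le_sqrt_of_sq_le
      rw [mul_pow, hk, Real.sq_sqrt (by positivity), div_eq_mul_one_div]
      gcongr
      rw [le_one_div (by positivity) hx0, ← hX]
      exact hxX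
    refine (jangRHS_le hm hc0 hx0 (by linarith) (by linarith) (hv.trans ?_)).trans ?_
    · nlinarith [mul_le_mul hqc hX5 hX0.le hc0.le]
    · rw [neg_mul, neg_mul, neg_le_neg_iff]
      gcongr
end

section
/- Fix c̄ ∈ (0, c_crit). Set A := 2√2·m and B := c̄²·√m·min{1, (1 - 1/(3√2))/(8m^{3/2})}. Then A > 0, B > 0, and for every c with c̄ ≤ c < c_crit, every s ∈ [0, 1/(3√2)], and every h ∈ [-1, 0]: F_c(s, h) ≤ -B·((1-h²)² - h³)/(A·s + δ), where δ := √(e·m·(c_crit² - c²)). -/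
theorem one_sub_mul_exp_le {y : ℝ} (h0 : 0 ≤ y) (h1 : y ≤ 1) :
    (1 - y) * Real.exp y ≤ 1 - y ^ 2 / 2 := by
  have h := Real.exp_bound' h0 h1 (n := 3) (by norm_num)
  norm_num [Finset.sum_range_succ, Nat.factorial] at h
  have h2 := mul_le_mul_of_nonneg_left h (sub_nonneg.2 h1)
  have h3 : 0 ≤ y ^ 3 := by positivity
  have h4 : 0 ≤ y ^ 4 := by positivity
  nlinarith

theorem cCrit_sq {m : ℝ} (hm : 0 < m) : cCrit m ^ 2 = 8 * m / Real.exp 1 :=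
  Real.sq_sqrt (by positivity)

theorem lt_two_mul_of_phi_neg {m r : ℝ} (h : phi m r < 0) : r < 2 * m := by
  by_contra! hr
  exact h.not_ge (mul_nonneg (Real.exp_pos _).le (sub_nonneg.2 hr))

/-- The Kruskal radius is bounded by the denominator of the key estimate. -/
theorem radius_le {m c s r : ℝ} (hm : 0 < m) (hc : 0 < c) (hcc : c < cCrit m) (hs : 0 ≤ s)
    (hr : 0 < r) (hr2 : r < 2 * m) (hphi : phi m r = c ^ 2 / 4 * (s ^ 2 - 1)) :
    r ≤ 2 * Real.sqrt 2 * m * s + Real.sqrt (Real.exp 1 * m * ((cCrit m) ^ 2 - c ^ 2)) := by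
  have he := Real.exp_pos 1
  have hX : 0 ≤ Real.exp 1 * m * ((cCrit m) ^ 2 - c ^ 2) := by
    have : c ^ 2 ≤ cCrit m ^ 2 := by gcongr
    exact mul_nonneg (by positivity) (by linarith)
  have hXval : Real.exp 1 * m * ((cCrit m) ^ 2 - c ^ 2) = 8 * m ^ 2 - Real.exp 1 * m * c ^ 2 := by
    rw [cCrit_sq hm]
    field_simp
  obtain ⟨y, rfl⟩ : ∃ y, r = 2 * m * y := ⟨r / (2 * m), by field_simp⟩
  have hy0 : 0 < y := pos_of_mul_pos_right hr (by positivity)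
  have hy1 : y ≤ 1 := by nlinarith
  have hexp := one_sub_mul_exp_le hy0.le hy1
  have hphi' : (1 - y) * Real.exp y * (8 * m) = Real.exp 1 * c ^ 2 * (1 - s ^ 2) := by
    have h2 : 2 * m * y / (2 * m) = y := by field_simp
    rw [phi, h2, Real.exp_sub] at hphi
    field_simp at hphi
    linarith
  have hsq2 : Real.sqrt 2 ^ 2 = 2 := Real.sq_sqrt (by norm_num)
  refine le_of_sq_le_sq ?_ (by positivity)
  have hsX := Real.sq_sqrt hX
  have hcross : 0 ≤ 2 * (2 * Real.sqrt 2 * m * s) *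
      Real.sqrt (Real.exp 1 * m * ((cCrit m) ^ 2 - c ^ 2)) := by positivity
  have hA : (2 * Real.sqrt 2 * m * s) ^ 2 = 8 * m ^ 2 * s ^ 2 := by
    rw [mul_pow, mul_pow, mul_pow, hsq2]
    ring
  have h1 : (1 - y) * Real.exp y * (8 * m) * m ≤ (1 - y ^ 2 / 2) * (8 * m) * m := by gcongr
  have h2 : 0 ≤ (8 * m ^ 2 - Real.exp 1 * m * c ^ 2) * s ^ 2 :=
    mul_nonneg (hXval ▸ hX) (sq_nonneg s)
  rw [add_sq, hsX, hA]
  rw [hphi'] at h1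
  nlinarith

theorem phiR_pos {m r : ℝ} (hm : 0 < m) (hr : 0 < r) : 0 < phiR m r := by
  unfold phiR
  positivity

theorem phiR_le_one {m r : ℝ} (hm : 0 < m) (hr2 : r ≤ 2 * m) : phiR m r ≤ 1 := by
  have hy : r / (2 * m) ≤ 1 := (div_le_one (by positivity)).2 hr2
  have hexp : Real.exp (r / (2 * m) - 1) ≤ 1 := Real.exp_le_one_iff.2 (by linarith)
  exact mul_le_one₀ hy (Real.exp_pos _).le hexp

theorem sqrt_add_sqrt_le {a b : ℝ} (ha : 0 ≤ a) (hb : 0 ≤ b) :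
    Real.sqrt a + Real.sqrt b ≤ Real.sqrt 2 * Real.sqrt (a + b) := by
  rw [← Real.sqrt_mul (by norm_num)]
  apply Real.le_sqrt_of_sq_le
  nlinarith [Real.sq_sqrt ha, Real.sq_sqrt hb, sq_nonneg (Real.sqrt a - Real.sqrt b)]

/-- The estimate of `r F_c / c²` in terms of `y = r / (2m)`, `D = φ_r` and `p = -h`. -/
theorem scaled_estimate {m s y D p : ℝ} (hm : 0 < m) (hs0 : 0 ≤ s)
    (hs1 : s * (3 * Real.sqrt 2) ≤ 1) (hy1 : y ≤ 1) (hy0 : 0 ≤ y)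
    (hD0 : 0 < D) (hD1 : D ≤ 1) (hp0 : 0 ≤ p) (hp1 : p ≤ 1) :
    Real.sqrt m * (1 - p ^ 2) ^ 2 + (1 - s) / (8 * m) * p ^ 3 ≤
      1 / 2 * Real.sqrt (2 * m * (1 - p ^ 2) / D + p ^ 2 / 4) *
        ((1 - p ^ 2) / D * (3 - y) + p ^ 2 / (2 * m))
      - s / (8 * m) * p ^ 3
      - s / (4 * D) * (y + 5) * (p * (1 - p ^ 2)) := by
  set q := 1 - p ^ 2 with hq
  have hq0 : 0 ≤ q := by nlinarith
  have hq1 : q ≤ 1 := by nlinarith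
  have ha : 0 ≤ 2 * m * q / D := by positivity
  have hsb : Real.sqrt (p ^ 2 / 4) = p / 2 := by
    rw [show p ^ 2 / 4 = (p / 2) ^ 2 by ring, Real.sqrt_sq (by positivity)]
  set S := Real.sqrt (2 * m * q / D + p ^ 2 / 4) with hS
  have hS1 : p / 2 ≤ S := hsb ▸ Real.sqrt_le_sqrt (by linarith)
  have hS2 := sqrt_add_sqrt_le ha (by positivity : 0 ≤ p ^ 2 / 4)
  rw [hsb, ← hS] at hS2
  set w := Real.sqrt 2 with hw
  have hw0 : 0 < w := by positivity
  have hw2 : w ^ 2 = 2 := Real.sq_sqrt (by norm_num)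
  have hroot : w * Real.sqrt m * q ≤ Real.sqrt (2 * m * q / D) := by
    apply Real.le_sqrt_of_sq_le
    rw [mul_pow, mul_pow, hw2, Real.sq_sqrt hm.le, le_div_iff₀ hD0]
    have : q * D ≤ 1 := mul_le_one₀ hq1 hD0.le hD1
    nlinarith [mul_nonneg (mul_nonneg hm.le hq0) (sub_nonneg.2 this)]
  have hlow : Real.sqrt m * q + w * p / 4 ≤ S := by
    have : w * (Real.sqrt m * q + w * p / 4) ≤ w * S := by nlinarith
    exact le_of_mul_le_mul_left this hw0
  have hsw : s ≤ w / 6 := by nlinarith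
  have hcore : Real.sqrt m * q ≤ 1 / 2 * S * (3 - y) - s / 4 * (y + 5) * p := by
    have h1 : (Real.sqrt m * q + w * p / 4) * (3 - y) ≤ S * (3 - y) :=
      mul_le_mul_of_nonneg_right hlow (by linarith)
    have h2 : s * ((y + 5) * p) ≤ w / 6 * ((y + 5) * p) :=
      mul_le_mul_of_nonneg_right hsw (by positivity)
    have h3 : 0 ≤ Real.sqrt m * q * (1 - y) :=
      mul_nonneg (by positivity) (by linarith)
    have h4 : 0 ≤ w * p * (1 - y) := mul_nonneg (by positivity) (by linarith)
    nlinarith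
  have hqD : q ≤ q / D := le_div_self hq0 hD0 hD1
  have hfirst : Real.sqrt m * q ^ 2 ≤
      q / D * (1 / 2 * S * (3 - y) - s / 4 * (y + 5) * p) := by
    calc Real.sqrt m * q ^ 2 = q * (Real.sqrt m * q) := by ring
      _ ≤ _ := mul_le_mul hqD hcore (by positivity) (by positivity)
  have hsecond : p / 2 * (p ^ 2 / (2 * m)) ≤ S * (p ^ 2 / (2 * m)) := by gcongr
  have e1 : p / 2 * (p ^ 2 / (2 * m)) = 2 * (1 / (8 * m) * p ^ 3) := by
    field_simp
    ring
  have e2 : (1 - s) / (8 * m) * p ^ 3 = 1 / (8 * m) * p ^ 3 - s / (8 * m) * p ^ 3 := by ring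
  have e3 : q / D * (1 / 2 * S * (3 - y) - s / 4 * (y + 5) * p) =
      1 / 2 * S * (q / D * (3 - y)) - s / (4 * D) * (y + 5) * (p * q) := by
    field_simp
  rw [e2]
  linarith

/-- With `A = 2√2 m` and `B = c̄²√m · min{1, (1 - 1/(3√2))/(8m^{3/2})}`,
one has `A, B > 0` and, for every `c ∈ [c̄, c_crit)`, `s ∈ [0, 1/(3√2)]`, `h ∈ [-1,0]`:
`F_c(s,h) ≤ -B((1-h²)² - h³)/(As + δ)` where `δ = √(em(c_crit² - c²))`. -/
theorem F_key_estimate (m cbar : ℝ) (hm : 0 < m) (hcbar : cbar ∈ Set.Ioo 0 (cCrit m)) :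
    0 < 2 * Real.sqrt 2 * m ∧
    0 < cbar^2 * Real.sqrt m * min 1 ((1 - 1/(3*Real.sqrt 2)) / (8 * m^((3:ℝ)/2))) ∧
    ∀ c, cbar ≤ c → c < cCrit m →
      ∀ s ∈ Set.Icc (0:ℝ) (1/(3*Real.sqrt 2)), ∀ x ∈ Set.Icc (-1:ℝ) 0,
        ∀ r, 0 < r → phi m r = c^2/4 * (s^2 - 1) →
          Fc m c s r x ≤
            -(cbar^2 * Real.sqrt m * min 1 ((1 - 1/(3*Real.sqrt 2)) / (8 * m^((3:ℝ)/2)))) *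
                ((1 - x^2)^2 - x^3) /
              (2 * Real.sqrt 2 * m * s +
                Real.sqrt (Real.exp 1 * m * ((cCrit m)^2 - c^2))) := by
  have hw : 0 < Real.sqrt 2 := by positivity
  have h3w : 1 < 3 * Real.sqrt 2 := by
    nlinarith [Real.one_lt_sqrt_two]
  have hσ : 1 / (3 * Real.sqrt 2) < 1 := (div_lt_one (by positivity)).2 h3w
  have hmin : 0 < min 1 ((1 - 1 / (3 * Real.sqrt 2)) / (8 * m ^ ((3 : ℝ) / 2))) :=
    lt_min one_pos (div_pos (by linarith) (by positivity))
  have hc0 := hcbar.1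
  refine ⟨by positivity, by positivity, ?_⟩
  rintro c hc hcc s ⟨hs0, hs1⟩ x ⟨hx1, hx0⟩ r hr hphi
  have hcpos : 0 < c := hc0.trans_le hc
  have hs1' : s * (3 * Real.sqrt 2) ≤ 1 := (le_div_iff₀ (by positivity)).1 hs1
  have hr2 : r < 2 * m := by
    apply lt_two_mul_of_phi_neg
    rw [hphi]
    exact mul_neg_of_pos_of_neg (by positivity) (by nlinarith)
  have hrle := radius_le hm hcpos hcc hs0 hr hr2 hphi
  have hest := scaled_estimate (y := r / (2 * m)) (p := -x) hm hs0 hs1'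
    ((div_le_one (by positivity)).2 hr2.le) (by positivity) (phiR_pos hm hr)
    (phiR_le_one hm hr2.le) (by linarith) (by linarith)
  set M := min 1 ((1 - 1 / (3 * Real.sqrt 2)) / (8 * m ^ ((3 : ℝ) / 2))) with hM
  have hpow : m ^ ((3 : ℝ) / 2) = m * Real.sqrt m := by
    rw [Real.sqrt_eq_rpow, ← Real.rpow_one_add' hm.le (by norm_num)]
    norm_num
  have hM1 : Real.sqrt m * M ≤ Real.sqrt m :=
    mul_le_of_le_one_right (by positivity) (min_le_left _ _)
  have hM2 : Real.sqrt m * M ≤ (1 - s) / (8 * m) := by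
    calc Real.sqrt m * M
        ≤ Real.sqrt m * ((1 - 1 / (3 * Real.sqrt 2)) / (8 * m ^ ((3 : ℝ) / 2))) := by
          gcongr
          exact min_le_right _ _
      _ = (1 - 1 / (3 * Real.sqrt 2)) / (8 * m) := by
          rw [hpow]
          field_simp
      _ ≤ _ := by gcongr
  have hp3 : 0 ≤ (-x) ^ 3 := pow_nonneg (by linarith) 3
  have hN : 0 ≤ (1 - x ^ 2) ^ 2 - x ^ 3 := by nlinarith [sq_nonneg (1 - x ^ 2)]
  set K := Real.sqrt m * M * ((1 - x ^ 2) ^ 2 - x ^ 3) with hK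
  have hK0 : 0 ≤ K := by positivity
  have hlow : K ≤ Real.sqrt m * (1 - (-x) ^ 2) ^ 2 + (1 - s) / (8 * m) * (-x) ^ 3 := by
    have h1 := mul_le_mul_of_nonneg_right hM1 (sq_nonneg (1 - x ^ 2))
    have h2 := mul_le_mul_of_nonneg_right hM2 hp3
    rw [neg_sq]
    nlinarith
  have hD := phiR_pos hm hr
  have hF : Fc m c s r x ≤ -(c ^ 2 * K) / r := by
    rw [le_div_iff₀ hr]
    have h := mul_le_mul_of_nonneg_left (hlow.trans hest) (sq_nonneg c)
    rw [neg_sq] at h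
    unfold Fc
    refine le_trans (le_of_eq ?_) (neg_le_neg h)
    field_simp
    ring
  refine hF.trans ?_
  have hcc2 : cbar ^ 2 * K ≤ c ^ 2 * K := by gcongr
  calc -(c ^ 2 * K) / r = -(c ^ 2 * K / r) := neg_div _ _
    _ ≤ -(cbar ^ 2 * K / _) := neg_le_neg (div_le_div₀ (by positivity) hcc2 hr hrle)
    _ = _ := by
      rw [hK, ← neg_div]
      congr 1
      ring
end
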